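/- Let k be a natural number and let C be an s-extremal singly even self-dual [24k+4, 12k+2, 4k+2] code. Then both neighbors N₁(C) = C₀ ∪ C₁ and N₃(C) = C₀ ∪ C₃ of C are also s-extremal singly even self-dual [24k+4, 12k+2, 4k+2] codes (i.e., each is singly even self-dual with minimum weight 4k+2, and its shadow has minimum weight 4k+2). -/

import Mathlib

open Finset

/-- Hamming weight of a binary vector. -/
def wt {n : ℕ} (x : Fin n → ZMod 2) : ℕ := hammingNorm x

/-- The dual of a set of binary vectors with respect to the standard inner product. -/
def dualSet {n : ℕ} (C : Set (Fin n → ZMod 2)) : Set (Fin n → ZMod 2) :=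
  {x | ∀ y ∈ C, ∑ i, x i * y i = 0}

/-- A binary linear code is self-dual if it equals its dual code. -/
def IsSelfDual {n : ℕ} (C : Submodule (ZMod 2) (Fin n → ZMod 2)) : Prop :=
  (C : Set (Fin n → ZMod 2)) = dualSet (C : Set (Fin n → ZMod 2))

/-- A self-dual code is singly even if some codeword has weight not divisible by 4. -/
def IsSinglyEvenSelfDual {n : ℕ} (C : Submodule (ZMod 2) (Fin n → ZMod 2)) : Prop :=
  IsSelfDual C ∧ ∃ x ∈ C, ¬ (4 ∣ wt x)

/-- The doubly even subcode `C₀` of `C` (as a set): codewords of weight ≡ 0 (mod 4). -/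
def evenSub {n : ℕ} (C : Submodule (ZMod 2) (Fin n → ZMod 2)) : Set (Fin n → ZMod 2) :=
  {x | x ∈ C ∧ 4 ∣ wt x}

/-- The shadow `S = C₀^⊥ \ C` of a singly even self-dual code. -/
def shadow {n : ℕ} (C : Submodule (ZMod 2) (Fin n → ZMod 2)) : Set (Fin n → ZMod 2) :=
  dualSet (evenSub C) \ (C : Set (Fin n → ZMod 2))

/-- The minimum (nonzero) weight of a set of vectors. -/
noncomputable def minWtSet {n : ℕ} (S : Set (Fin n → ZMod 2)) : ℕ :=
  sInf {w | ∃ x ∈ S, x ≠ 0 ∧ wt x = w}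

/-- The minimum weight of a code. -/
noncomputable def minWt {n : ℕ} (C : Submodule (ZMod 2) (Fin n → ZMod 2)) : ℕ :=
  minWtSet (C : Set (Fin n → ZMod 2))

/-- A singly even self-dual code of length `n` is s-extremal if
`d(S) = n/2 + 4 - 2 d(C)`. -/
def IsSExtremal {n : ℕ} (C : Submodule (ZMod 2) (Fin n → ZMod 2)) : Prop :=
  IsSinglyEvenSelfDual C ∧
    (minWtSet (shadow C) : ℤ) = ((n / 2 : ℕ) : ℤ) + 4 - 2 * (minWt C : ℤ)

/-- Two codes are equivalent if one is obtained from the other by permuting coordinates. -/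
def CodeEquiv {n : ℕ} (C D : Submodule (ZMod 2) (Fin n → ZMod 2)) : Prop :=
  ∃ σ : Equiv.Perm (Fin n),
    Submodule.map (LinearMap.funLeft (ZMod 2) (ZMod 2) σ) C = D

/-- The neighbor `C₀ ∪ (t + C₀)` of `C` obtained from a shadow vector `t`:
the span of the doubly even subcode together with `t`. -/
def neighborCode {n : ℕ} (C : Submodule (ZMod 2) (Fin n → ZMod 2))
    (t : Fin n → ZMod 2) : Submodule (ZMod 2) (Fin n → ZMod 2) :=
  Submodule.span (ZMod 2) (evenSub C ∪ {t})

/-!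
If `N` were doubly even, the MacWilliams identity at `(1, i)` would force `8 ∣ n`; hence
`N = neighborCode C t` is singly even, its doubly even subcode is again `C₀`, and a word of minimum
weight of `C` lies in the shadow of `N`.

For the minimum weight of `N`, let `d = 4k + 2` and let `P` be the difference of the weight
enumerators of `C` and `N`. Only words in exactly one of the two codes contribute to `P`. Their
weight is `2` modulo `4`, and it lies between `d` and `n - d` because `C₀^⊥ = C ∪ S` has minimum
weight `d` and is closed under `x ↦ x + 1`. So `X ^ d` divides `P`, the MacWilliams identity makes
`(1 - X ^ 2) ^ d` divide `P`, and `P(iX) = -P(X)` makes `(1 + X ^ 2) ^ d` divide `P`. Since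
`deg P ≤ n - d < 5 * d`, `P` vanishes.
-/

section BilinForm

open LinearMap (BilinForm)

lemma orthogonal_sup {R M : Type*} [CommSemiring R] [AddCommMonoid M] [Module R M]
    (B : BilinForm R M) (U W : Submodule R M) :
    B.orthogonal (U ⊔ W) = B.orthogonal U ⊓ B.orthogonal W := by
  refine le_antisymm (le_inf (BilinForm.orthogonal_le le_sup_left)
    (BilinForm.orthogonal_le le_sup_right)) fun x hx y hy => ?_
  obtain ⟨u, hu, w, hw, rfl⟩ := Submodule.mem_sup.mp hy
  rw [map_add, LinearMap.add_apply, hx.1 u hu, hx.2 w hw, add_zero]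

/- With `C⊥ = C`, the orthogonal complement of `(C ⊓ L⊥) ⊔ L` is `(C ⊔ L) ⊓ L⊥`, and the two agree
by the modular law. -/
lemma orthogonal_inf_orthogonal_sup {K V : Type*} [Field K] [AddCommGroup V] [Module K V]
    [FiniteDimensional K V] {B : BilinForm K V} (hB : B.Nondegenerate) (hB₀ : B.IsRefl)
    {C L : Submodule K V} (hC : B.orthogonal C = C) (hL : L ≤ B.orthogonal L) :
    B.orthogonal (C ⊓ B.orthogonal L ⊔ L) = C ⊓ B.orthogonal L ⊔ L := by
  have hinf : B.orthogonal (C ⊓ B.orthogonal L) = C ⊔ L := by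
    rw [← BilinForm.orthogonal_orthogonal hB hB₀ (C ⊔ L), orthogonal_sup, hC]
  rw [orthogonal_sup, hinf, sup_comm C, sup_inf_assoc_of_le C hL, sup_comm]

end BilinForm

section Polynomial

open Polynomial

lemma eq_zero_of_pow_dvd_of_natDegree_lt {K : Type*} [Field K] [NeZero (2 : K)] {P : K[X]}
    {d : ℕ} (h0 : X ^ d ∣ P) (h1 : (1 - X ^ 2) ^ d ∣ P) (hI : (1 + X ^ 2) ^ d ∣ P)
    (hdeg : P.natDegree < 5 * d) : P = 0 := by
  have hhalf : (C 2⁻¹ : K[X]) * 2 = 1 := by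
    rw [← C_ofNat, ← C_mul, inv_mul_cancel₀ two_ne_zero, C_1]
  have hcop : IsCoprime (1 - X ^ 2 : K[X]) (1 + X ^ 2) :=
    ⟨C 2⁻¹, C 2⁻¹, by linear_combination hhalf⟩
  have hcopX : IsCoprime (X : K[X]) ((1 - X ^ 2) * (1 + X ^ 2)) := ⟨X ^ 3, 1, by ring⟩
  have hdvd : (X * ((1 - X ^ 2) * (1 + X ^ 2)) : K[X]) ^ d ∣ P := by
    rw [mul_pow]
    refine hcopX.pow.mul_dvd h0 ?_
    rw [mul_pow]
    exact hcop.pow.mul_dvd h1 hI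
  have hfive : (X * ((1 - X ^ 2) * (1 + X ^ 2)) : K[X]).natDegree = 5 := by
    rw [show (X * ((1 - X ^ 2) * (1 + X ^ 2)) : K[X]) = X - X ^ 5 by ring]
    compute_degree!
  refine eq_zero_of_dvd_of_natDegree_lt hdvd ?_
  rwa [natDegree_pow, hfive, mul_comm]

lemma one_add_X_sq_pow_dvd_of_comp_eq_neg {R : Type*} [CommRing R] {c : R} (hc : c ^ 2 = -1)
    {P : R[X]} (hP : P.comp (C c * X) = -P) {d : ℕ} (h1 : (1 - X ^ 2) ^ d ∣ P) :
    (1 + X ^ 2) ^ d ∣ P := by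
  have h : (1 - (C c * X) ^ 2) ^ d ∣ P.comp (C c * X) := by
    simpa using map_dvd (compRingHom (C c * X)) h1
  rwa [hP, dvd_neg, mul_pow, ← C_pow, hc, C_neg, C_1, neg_one_mul, sub_neg_eq_add] at h

end Polynomial

variable {n : ℕ}

/-- The standard inner product on `𝔽₂ⁿ`, as a bilinear form. -/
def dotForm (n : ℕ) : LinearMap.BilinForm (ZMod 2) (Fin n → ZMod 2) :=
  dotProductBilin (ZMod 2) (ZMod 2)

lemma dotForm_apply (x y : Fin n → ZMod 2) : dotForm n x y = x ⬝ᵥ y := rfl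

lemma dotForm_isSymm : (dotForm n).IsSymm := ⟨fun x y => dotProduct_comm x y⟩

lemma dotForm_nondegenerate : (dotForm n).Nondegenerate :=
  dotForm_isSymm.isRefl.nondegenerate_iff_separatingLeft.mpr fun x => dotProduct_eq_zero x

lemma mem_dualSet_iff {S : Set (Fin n → ZMod 2)} {x : Fin n → ZMod 2} :
    x ∈ dualSet S ↔ ∀ y ∈ S, x ⬝ᵥ y = 0 := Iff.rfl

lemma coe_orthogonal_dotForm (C : Submodule (ZMod 2) (Fin n → ZMod 2)) :
    ((dotForm n).orthogonal C : Set (Fin n → ZMod 2)) = dualSet C := by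
  ext x
  simp [mem_dualSet_iff, dotForm_apply, dotProduct_comm x, LinearMap.BilinForm.mem_orthogonal_iff]

lemma isSelfDual_iff_orthogonal_eq {C : Submodule (ZMod 2) (Fin n → ZMod 2)} :
    IsSelfDual C ↔ (dotForm n).orthogonal C = C := by
  rw [IsSelfDual, ← coe_orthogonal_dotForm, SetLike.coe_set_eq, eq_comm]

/-! ### Weights -/

lemma wt_eq_zero_iff {x : Fin n → ZMod 2} : wt x = 0 ↔ x = 0 := hammingNorm_eq_zero

lemma wt_le (x : Fin n → ZMod 2) : wt x ≤ n := by
  simpa [wt] using hammingNorm_le_card_fintype (x := x)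

lemma wt_one : wt (1 : Fin n → ZMod 2) = n := by
  simp [wt, hammingNorm]

lemma prod_ite_eq_pow_wt {R : Type*} [CommMonoid R] (a b : R) (x : Fin n → ZMod 2) :
    ∏ i, (if x i = 0 then a else b) = a ^ (n - wt x) * b ^ wt x := by
  have hcard := Finset.card_filter_add_card_filter_not (s := univ) (fun i => x i = 0)
  have hwt : #{i | ¬x i = 0} = wt x := rfl
  rw [Finset.card_univ, Fintype.card_fin, hwt] at hcard
  rw [Finset.prod_ite, Finset.prod_const, Finset.prod_const, hwt,
    Nat.eq_sub_of_add_eq hcard]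

lemma wt_eq_sum_val (x : Fin n → ZMod 2) : wt x = ∑ i, (x i).val := by
  have hval : ∀ a : ZMod 2, (if a ≠ 0 then 1 else 0) = a.val := by decide
  simp only [wt, hammingNorm, Finset.card_filter, hval]

lemma natCast_wt (x : Fin n → ZMod 2) : (wt x : ZMod 2) = x ⬝ᵥ 1 := by
  simp [wt_eq_sum_val, dotProduct]

lemma dotProduct_self_eq_dotProduct_one (x : Fin n → ZMod 2) : x ⬝ᵥ x = x ⬝ᵥ 1 := by
  have hsq : ∀ a : ZMod 2, a * a = a := by decide
  simp [dotProduct, hsq]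

lemma wt_add_add_two_mul (x y : Fin n → ZMod 2) :
    wt (x + y) + 2 * ∑ i, (x i).val * (y i).val = wt x + wt y := by
  have hval : ∀ a b : ZMod 2, (a + b).val + 2 * (a.val * b.val) = a.val + b.val := by decide
  simp only [wt_eq_sum_val, Finset.mul_sum, ← Finset.sum_add_distrib, Pi.add_apply, hval]

lemma wt_add_modEq_of_dotProduct_eq_zero {x y : Fin n → ZMod 2} (h : x ⬝ᵥ y = 0) :
    wt (x + y) ≡ wt x + wt y [MOD 4] := by
  have heven : 2 ∣ ∑ i, (x i).val * (y i).val := by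
    rw [← ZMod.natCast_eq_zero_iff, ← h]
    simp [dotProduct]
  have hadd := wt_add_add_two_mul x y
  rw [Nat.ModEq]
  omega

lemma wt_add_one_add_wt (x : Fin n → ZMod 2) : wt (x + 1) + wt x = n := by
  have hadd := wt_add_add_two_mul x 1
  simp only [Pi.one_apply, ZMod.val_one, mul_one, ← wt_eq_sum_val, wt_one] at hadd
  omega

lemma minWtSet_le_wt {S : Set (Fin n → ZMod 2)} {x : Fin n → ZMod 2} (hx : x ∈ S) (h0 : x ≠ 0) :
    minWtSet S ≤ wt x := Nat.sInf_le ⟨x, hx, h0, rfl⟩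

lemma exists_wt_eq_minWtSet {S : Set (Fin n → ZMod 2)} (h : minWtSet S ≠ 0) :
    ∃ x ∈ S, wt x = minWtSet S :=
  let ⟨x, hx, _, hwt⟩ := Nat.sInf_mem <| Nat.nonempty_of_pos_sInf <| Nat.pos_of_ne_zero h
  ⟨x, hx, hwt⟩

lemma minWtSet_eq_of_forall_le {S : Set (Fin n → ZMod 2)} {d : ℕ}
    (hle : ∀ x ∈ S, x ≠ 0 → d ≤ wt x) {x : Fin n → ZMod 2} (hx : x ∈ S) (h0 : x ≠ 0)
    (hwt : wt x = d) : minWtSet S = d :=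
  IsLeast.csInf_eq ⟨⟨x, hx, h0, hwt⟩, fun _ ⟨y, hy, hy0, hw⟩ => hw ▸ hle y hy hy0⟩

/-! ### Self-dual codes -/

namespace IsSelfDual

variable {C : Submodule (ZMod 2) (Fin n → ZMod 2)} {x y t : Fin n → ZMod 2}

lemma mem_iff (hC : IsSelfDual C) : x ∈ C ↔ ∀ y ∈ C, x ⬝ᵥ y = 0 := Set.ext_iff.mp hC x

lemma dotProduct_eq_zero (hC : IsSelfDual C) (hx : x ∈ C) (hy : y ∈ C) : x ⬝ᵥ y = 0 :=
  hC.mem_iff.mp hx y hy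

lemma two_mul_finrank (hC : IsSelfDual C) : 2 * Module.finrank (ZMod 2) C = n := by
  have h := LinearMap.BilinForm.finrank_orthogonal dotForm_nondegenerate C
  have hle := C.finrank_le
  rw [isSelfDual_iff_orthogonal_eq.mp hC] at h
  rw [Module.finrank_fin_fun] at h hle
  omega

lemma card_eq (hC : IsSelfDual C) : Nat.card C = 2 ^ (n / 2) := by
  rw [Module.natCard_eq_pow_finrank (K := ZMod 2), Nat.card_zmod,
    Nat.eq_div_of_mul_eq_right two_ne_zero hC.two_mul_finrank]

lemma one_mem (hC : IsSelfDual C) : 1 ∈ C :=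
  hC.mem_iff.mpr fun y hy => by
    rw [dotProduct_comm, ← dotProduct_self_eq_dotProduct_one, hC.dotProduct_eq_zero hy hy]

lemma subset_dualSet_evenSub (hC : IsSelfDual C) :
    (C : Set (Fin n → ZMod 2)) ⊆ dualSet (evenSub C) :=
  fun _ hx _ hy => hC.dotProduct_eq_zero hx hy.1

lemma wt_add_modEq (hC : IsSelfDual C) (hx : x ∈ C) (hy : y ∈ C) :
    wt (x + y) ≡ wt x + wt y [MOD 4] :=
  wt_add_modEq_of_dotProduct_eq_zero (hC.dotProduct_eq_zero hx hy)

lemma two_dvd_wt (hC : IsSelfDual C) (hx : x ∈ C) : 2 ∣ wt x := by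
  rw [← ZMod.natCast_eq_zero_iff, natCast_wt, hC.dotProduct_eq_zero hx hC.one_mem]

lemma add_mem_evenSub (hC : IsSelfDual C) (hx : x ∈ evenSub C) (hy : y ∈ evenSub C) :
    x + y ∈ evenSub C :=
  ⟨C.add_mem hx.1 hy.1, ((hC.wt_add_modEq hx.1 hy.1).dvd_iff dvd_rfl).mpr (dvd_add hx.2 hy.2)⟩

lemma one_mem_evenSub (hC : IsSelfDual C) (hn : 4 ∣ n) : 1 ∈ evenSub C :=
  ⟨hC.one_mem, by rwa [wt_one]⟩

/-! ### Neighbors -/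

/- If `t` were orthogonal to some `x ∈ C` of weight `2` modulo `4`, it would be orthogonal to all of
`C = C₀ ∪ (x + C₀)`. -/
lemma mem_evenSub_iff_of_mem_shadow (hC : IsSelfDual C) (ht : t ∈ shadow C) :
    x ∈ evenSub C ↔ x ∈ C ∧ t ⬝ᵥ x = 0 := by
  refine ⟨fun hx => ⟨hx.1, ht.1 x hx⟩, fun ⟨hxC, htx⟩ => ⟨hxC, ?_⟩⟩
  by_contra hx
  refine ht.2 (hC.mem_iff.mpr fun y hy => ?_)
  by_cases hy4 : 4 ∣ wt y
  · exact ht.1 y ⟨hy, hy4⟩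
  · have hxy : x + y ∈ evenSub C := by
      have h2x := hC.two_dvd_wt hxC
      have h2y := hC.two_dvd_wt hy
      have hmod := hC.wt_add_modEq hxC hy
      rw [Nat.ModEq] at hmod
      exact ⟨C.add_mem hxC hy, by omega⟩
    have h := ht.1 _ hxy
    rwa [← dotProduct, dotProduct_add, htx, zero_add] at h

lemma evenSub_eq_inf_orthogonal (hC : IsSelfDual C) (ht : t ∈ shadow C) :
    evenSub C = ↑(C ⊓ (dotForm n).orthogonal (ZMod 2 ∙ t)) := by
  ext x
  rw [hC.mem_evenSub_iff_of_mem_shadow ht, SetLike.mem_coe, Submodule.mem_inf,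
    LinearMap.BilinForm.orthogonal_span_singleton_eq_toLin_ker]
  rfl

lemma neighborCode_eq_sup (hC : IsSelfDual C) (ht : t ∈ shadow C) :
    neighborCode C t = C ⊓ (dotForm n).orthogonal (ZMod 2 ∙ t) ⊔ (ZMod 2 ∙ t) := by
  rw [neighborCode, Submodule.span_union, hC.evenSub_eq_inf_orthogonal ht, Submodule.span_eq]

lemma mem_neighborCode_iff (hC : IsSelfDual C) (ht : t ∈ shadow C) :
    x ∈ neighborCode C t ↔ x ∈ evenSub C ∨ t + x ∈ evenSub C := by
  rw [hC.neighborCode_eq_sup ht, hC.evenSub_eq_inf_orthogonal ht]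
  have hscalar : ∀ c : ZMod 2, c = 0 ∨ c = 1 := by decide
  constructor
  · intro hx
    obtain ⟨y, hy, z, hz, rfl⟩ := Submodule.mem_sup.mp hx
    obtain ⟨c, rfl⟩ := Submodule.mem_span_singleton.mp hz
    obtain rfl | rfl := hscalar c
    · left
      simpa using hy
    · right
      rwa [one_smul, add_left_comm, ZModModule.add_self, add_zero]
  · rintro (hx | hx)
    · exact Submodule.mem_sup_left hx
    · have h := Submodule.add_mem_sup hx (Submodule.mem_span_singleton_self t)
      rwa [add_right_comm, ZModModule.add_self, zero_add] at h

lemma mem_evenSub_of_mem_neighborCode (hC : IsSelfDual C) (ht : t ∈ shadow C) (hx : x ∈ C)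
    (hxN : x ∈ neighborCode C t) : x ∈ evenSub C :=
  ((hC.mem_neighborCode_iff ht).mp hxN).resolve_right fun htx =>
    ht.2 ((C.add_mem_iff_left hx).mp htx.1)

protected lemma neighborCode (hC : IsSelfDual C) (hn : 4 ∣ n) (ht : t ∈ shadow C) :
    IsSelfDual (neighborCode C t) := by
  have htt : t ⬝ᵥ t = 0 := by
    rw [dotProduct_self_eq_dotProduct_one]
    exact ht.1 1 (hC.one_mem_evenSub hn)
  rw [hC.neighborCode_eq_sup ht, isSelfDual_iff_orthogonal_eq]
  refine orthogonal_inf_orthogonal_sup dotForm_nondegenerate dotForm_isSymm.isRefl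
    (isSelfDual_iff_orthogonal_eq.mp hC) ?_
  rw [LinearMap.BilinForm.orthogonal_span_singleton_eq_toLin_ker,
    Submodule.span_singleton_le_iff_mem]
  exact htt

end IsSelfDual

/-! ### Weight enumerators -/

section WeightEnumerator

open Polynomial

variable {R : Type*} [CommRing R]

open Classical in
/-- The homogeneous weight enumerator `∑_{x ∈ S} a ^ (n - wt x) * b ^ wt x` of a set of binary
vectors, evaluated at `a` and `b`. -/
noncomputable def weightEnumerator (S : Set (Fin n → ZMod 2)) (a b : R) : R :=
  ∑ x with x ∈ S, a ^ (n - wt x) * b ^ wt x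

lemma weightEnumerator_sub_weightEnumerator (S T : Set (Fin n → ZMod 2)) (a b : R) :
    weightEnumerator S a b - weightEnumerator T a b =
      weightEnumerator (S \ T) a b - weightEnumerator (T \ S) a b := by
  classical
  simp only [weightEnumerator]
  rw [← Finset.sum_sdiff_sub_sum_sdiff]
  congr! 2 <;> ext <;> simp

lemma map_weightEnumerator {R' : Type*} [CommRing R'] (f : R →+* R') (S : Set (Fin n → ZMod 2))
    (a b : R) : f (weightEnumerator S a b) = weightEnumerator S (f a) (f b) := by
  simp [weightEnumerator]

lemma weightEnumerator_mul_of_pow_eq {S : Set (Fin n → ZMod 2)} {c c' : R}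
    (hc : ∀ x ∈ S, c ^ wt x = c') (a b : R) :
    weightEnumerator S a (c * b) = c' * weightEnumerator S a b := by
  classical
  rw [weightEnumerator, weightEnumerator, Finset.mul_sum]
  refine Finset.sum_congr rfl fun x hx => ?_
  rw [mul_pow, hc x (Finset.mem_filter.mp hx).2, mul_left_comm]

lemma pow_mul_pow_dvd_weightEnumerator {S : Set (Fin n → ZMod 2)} {d e : ℕ}
    (hS : ∀ x ∈ S, d ≤ wt x ∧ wt x + e ≤ n) (a b : R) : a ^ e * b ^ d ∣ weightEnumerator S a b := by
  classical
  refine Finset.dvd_sum fun x hx => ?_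
  obtain ⟨hd, he⟩ := hS x (Finset.mem_filter.mp hx).2
  exact mul_dvd_mul (pow_dvd_pow a (by omega)) (pow_dvd_pow b hd)

lemma natDegree_weightEnumerator_le {S : Set (Fin n → ZMod 2)} {e : ℕ}
    (hS : ∀ x ∈ S, wt x ≤ e) : (weightEnumerator S 1 (X : R[X])).natDegree ≤ e := by
  classical
  refine natDegree_sum_le_of_forall_le _ _ fun x hx => ?_
  rw [one_pow, one_mul]
  exact (natDegree_X_pow_le _).trans (hS x (Finset.mem_filter.mp hx).2)

lemma coeff_weightEnumerator_ne_zero_iff [CharZero R] {S : Set (Fin n → ZMod 2)} {w : ℕ} :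
    (weightEnumerator S 1 (X : R[X])).coeff w ≠ 0 ↔ ∃ x ∈ S, wt x = w := by
  classical
  simp only [weightEnumerator, one_pow, one_mul, finsetSum_coeff, coeff_X_pow, Finset.sum_boole,
    Nat.cast_ne_zero, Finset.card_ne_zero, Finset.Nonempty, Finset.mem_filter, Finset.mem_univ,
    true_and, eq_comm (a := w)]

lemma minWtSet_eq_of_weightEnumerator_eq [CharZero R] {S T : Set (Fin n → ZMod 2)}
    (h : weightEnumerator S 1 (X : R[X]) = weightEnumerator T 1 X) : minWtSet S = minWtSet T := by
  have hwt (w : ℕ) : (∃ x ∈ S, wt x = w) ↔ ∃ x ∈ T, wt x = w := by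
    rw [← coeff_weightEnumerator_ne_zero_iff (R := R), h, coeff_weightEnumerator_ne_zero_iff]
  have hset (U : Set (Fin n → ZMod 2)) :
      {w | ∃ x ∈ U, x ≠ 0 ∧ wt x = w} = {w | w ≠ 0 ∧ ∃ x ∈ U, wt x = w} := by
    ext w
    constructor
    · rintro ⟨x, hx, h0, rfl⟩
      exact ⟨wt_eq_zero_iff.not.mpr h0, x, hx, rfl⟩
    · rintro ⟨h0, x, hx, rfl⟩
      exact ⟨x, hx, wt_eq_zero_iff.not.mp h0, rfl⟩
  simp only [minWtSet, hset, hwt]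

lemma weightEnumerator_comp_of_wt_mod_four_eq_two {c : R} (hc : c ^ 2 = -1)
    {S : Set (Fin n → ZMod 2)} (hS : ∀ x ∈ S, wt x % 4 = 2) :
    (weightEnumerator S 1 (X : R[X])).comp (C c * X) = -weightEnumerator S 1 X := by
  have hpow (x) (hx : x ∈ S) : (C c : R[X]) ^ wt x = -1 := by
    have hodd : Odd (wt x / 2) := Nat.odd_iff.mpr (by have := hS x hx; omega)
    have heven : 2 * (wt x / 2) = wt x := by have := hS x hx; omega
    rw [← heven, pow_mul, ← C_pow, hc, C_neg, C_1, hodd.neg_one_pow]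
  have hmap := map_weightEnumerator (compRingHom (C c * X)) S 1 (X : R[X])
  rwa [map_one, coe_compRingHom_apply, coe_compRingHom_apply, X_comp,
    weightEnumerator_mul_of_pow_eq hpow, neg_one_mul] at hmap

/-! ### The MacWilliams identity -/

lemma addChar_sum_eq_prod {ι A M : Type*} [AddCommMonoid A] [CommMonoid M] (ψ : AddChar A M)
    (s : Finset ι) (f : ι → A) : ψ (∑ i ∈ s, f i) = ∏ i ∈ s, ψ (f i) :=
  map_prod ψ.toMonoidHom (fun i => Multiplicative.ofAdd (f i)) s

/-- The nontrivial additive character `a ↦ (-1) ^ a` of `𝔽₂`. -/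
def signChar : AddChar (ZMod 2) ℤ := AddChar.zmodChar 2 (neg_one_sq (R := ℤ))

lemma signChar_one : signChar 1 = -1 := by
  decide

lemma signChar_eq_one_iff {a : ZMod 2} : signChar a = 1 ↔ a = 0 := by
  revert a
  decide

open Classical in
lemma sum_signChar_dotProduct (C : Submodule (ZMod 2) (Fin n → ZMod 2)) (v : Fin n → ZMod 2) :
    ∑ u with u ∈ C, signChar (u ⬝ᵥ v) =
      if v ∈ dualSet (C : Set (Fin n → ZMod 2)) then (Nat.card C : ℤ) else 0 := by
  set χ : AddChar C ℤ :=
    signChar.compAddMonoidHom ((dotForm n).flip v ∘ₗ C.subtype).toAddMonoidHom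
  have hχ : χ = 0 ↔ v ∈ dualSet (C : Set (Fin n → ZMod 2)) := by
    simp only [AddChar.eq_zero_iff, Subtype.forall, mem_dualSet_iff, dotProduct_comm v]
    exact forall₂_congr fun u hu => signChar_eq_one_iff
  rw [Finset.sum_subtype _ (p := (· ∈ C)) (F := inferInstance) (by simp)]
  simp only [← hχ, Nat.card_eq_fintype_card]
  exact AddChar.sum_eq_ite χ

lemma sum_signChar_dotProduct_mul_pow_wt (u : Fin n → ZMod 2) (a b : R) :
    ∑ v : Fin n → ZMod 2, (signChar (u ⬝ᵥ v) : R) * (a ^ (n - wt v) * b ^ wt v) =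
      (a + b) ^ (n - wt u) * (a - b) ^ wt u := by
  have hfactor (v : Fin n → ZMod 2) :
      (signChar (u ⬝ᵥ v) : R) * (a ^ (n - wt v) * b ^ wt v) =
        ∏ i, (signChar (u i * v i) : R) * if v i = 0 then a else b := by
    rw [Finset.prod_mul_distrib, prod_ite_eq_pow_wt, dotProduct, addChar_sum_eq_prod,
      Int.cast_prod]
  have hcoord (c : ZMod 2) :
      ∑ e : ZMod 2, (signChar (c * e) : R) * (if e = 0 then a else b) =
        if c = 0 then a + b else a - b := by
    rw [show (univ : Finset (ZMod 2)) = {0, 1} from rfl, Finset.sum_pair zero_ne_one]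
    obtain rfl | rfl : c = 0 ∨ c = 1 := by revert c; decide
    · simp
    · simp [signChar_one, sub_eq_add_neg]
  rw [Finset.sum_congr rfl fun v _ => hfactor v,
    ← Fintype.prod_sum fun i e => (signChar (u i * e) : R) * if e = 0 then a else b]
  simp only [hcoord, prod_ite_eq_pow_wt]

theorem card_mul_weightEnumerator_dualSet (C : Submodule (ZMod 2) (Fin n → ZMod 2)) (a b : R) :
    (Nat.card C : R) * weightEnumerator (dualSet (C : Set (Fin n → ZMod 2))) a b =
      weightEnumerator (C : Set (Fin n → ZMod 2)) (a + b) (a - b) := by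
  classical
  have hchar (v : Fin n → ZMod 2) : ∑ u with u ∈ C, (signChar (u ⬝ᵥ v) : R) =
      if v ∈ dualSet (C : Set (Fin n → ZMod 2)) then (Nat.card C : R) else 0 := by
    exact_mod_cast congrArg (Int.cast (R := R)) (sum_signChar_dotProduct C v)
  calc (Nat.card C : R) * weightEnumerator (dualSet (C : Set (Fin n → ZMod 2))) a b
      = ∑ v : Fin n → ZMod 2, ∑ u with u ∈ C,
          (signChar (u ⬝ᵥ v) : R) * (a ^ (n - wt v) * b ^ wt v) := by
        simp only [← Finset.sum_mul, hchar, weightEnumerator, Finset.mul_sum, Finset.sum_filter,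
          ite_mul, zero_mul, mul_ite, mul_zero]
    _ = weightEnumerator (C : Set (Fin n → ZMod 2)) (a + b) (a - b) := by
        rw [Finset.sum_comm]
        simp only [sum_signChar_dotProduct_mul_pow_wt, weightEnumerator, SetLike.mem_coe]

lemma IsSelfDual.card_mul_weightEnumerator {C : Submodule (ZMod 2) (Fin n → ZMod 2)}
    (hC : IsSelfDual C) (a b : R) :
    (Nat.card C : R) * weightEnumerator (C : Set (Fin n → ZMod 2)) a b =
      weightEnumerator (C : Set (Fin n → ZMod 2)) (a + b) (a - b) := by
  rw [← card_mul_weightEnumerator_dualSet C a b, ← hC]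

lemma weightEnumerator_self (S : Set (Fin n → ZMod 2)) (a : R) :
    weightEnumerator S a a = Nat.card S * a ^ n := by
  classical
  have hterm (x : Fin n → ZMod 2) : a ^ (n - wt x) * a ^ wt x = a ^ n := by
    rw [← pow_add, Nat.sub_add_cancel (wt_le x)]
  simp only [weightEnumerator, hterm, Finset.sum_const, nsmul_eq_mul,
    Nat.card_eq_fintype_card, Fintype.card_subtype]

end WeightEnumerator

/- For doubly even `C` the MacWilliams identity at `(1, i)` reads `|C| = (1 + i) ^ n`, that is,
`i ^ (n / 2) = 1`. -/
theorem IsSelfDual.eight_dvd_of_forall_four_dvd_wt {C : Submodule (ZMod 2) (Fin n → ZMod 2)}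
    (hC : IsSelfDual C) (h4 : ∀ x ∈ C, 4 ∣ wt x) : 8 ∣ n := by
  have hpow {c : ℂ} (hc : c ^ 4 = 1) : ∀ x ∈ (C : Set (Fin n → ZMod 2)), c ^ wt x = 1 :=
    fun x hx => by
      obtain ⟨m, hm⟩ := h4 x hx
      rw [hm, pow_mul, hc, one_pow]
  obtain ⟨m, rfl⟩ : 2 ∣ n := ⟨_, hC.two_mul_finrank.symm⟩
  have hcard : (Nat.card C : ℂ) = 2 ^ m := by
    rw [hC.card_eq, Nat.mul_div_cancel_left _ two_pos, Nat.cast_pow, Nat.cast_ofNat]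
  have hleft : weightEnumerator (C : Set (Fin (2 * m) → ZMod 2)) 1 Complex.I = Nat.card C := by
    rw [← mul_one Complex.I, weightEnumerator_mul_of_pow_eq (hpow Complex.I_pow_four),
      weightEnumerator_self, one_pow, one_mul, mul_one]
    rfl
  have hright : weightEnumerator (C : Set (Fin (2 * m) → ZMod 2)) (1 + Complex.I)
      (1 - Complex.I) = Nat.card C * (1 + Complex.I) ^ (2 * m) := by
    rw [show 1 - Complex.I = -Complex.I * (1 + Complex.I) by linear_combination Complex.I_sq,
      weightEnumerator_mul_of_pow_eq (hpow (by rw [Even.neg_pow (by decide), Complex.I_pow_four])),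
      weightEnumerator_self, one_mul]
    rfl
  have hmac := hC.card_mul_weightEnumerator 1 Complex.I
  rw [hleft, hright, hcard] at hmac
  have hsq : (1 + Complex.I) ^ 2 = 2 * Complex.I := by linear_combination Complex.I_sq
  have hI : Complex.I ^ m = 1 := by
    refine mul_left_cancel₀ (pow_ne_zero m (two_ne_zero (α := ℂ))) ?_
    have h := mul_left_cancel₀ (pow_ne_zero m two_ne_zero) hmac
    rw [mul_one, ← mul_pow, ← hsq, ← pow_mul, ← h]
  suffices 4 ∣ m by omega
  rw [Complex.I_pow_eq_pow_mod] at hI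
  have hlt := Nat.mod_lt m four_pos
  rw [Nat.dvd_iff_mod_eq_zero]
  interval_cases m % 4
  · rfl
  all_goals norm_num [Complex.ext_iff] at hI

section EvenSub

variable {C D : Submodule (ZMod 2) (Fin n → ZMod 2)}

/- If the shadow word `t` had weight divisible by `4`, so would every word of
`neighborCode C t = C₀ ∪ (t + C₀)`. -/
lemma IsSelfDual.evenSub_neighborCode {t : Fin n → ZMod 2} (hC : IsSelfDual C) (hn : n % 8 = 4)
    (ht : t ∈ shadow C) : evenSub (neighborCode C t) = evenSub C := by
  have hN := hC.neighborCode (by omega) ht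
  have hsub : evenSub C ⊆ evenSub (neighborCode C t) :=
    fun x hx => ⟨Submodule.subset_span (Or.inl hx), hx.2⟩
  refine Set.Subset.antisymm (fun x hx => ?_) hsub
  refine ((hC.mem_neighborCode_iff ht).mp hx.1).resolve_right fun htx => ?_
  have ht4 : 4 ∣ wt t := by
    have h := hN.add_mem_evenSub (hsub htx) hx
    rw [add_assoc, ZModModule.add_self, add_zero] at h
    exact h.2
  have hdvd : 8 ∣ n := hN.eight_dvd_of_forall_four_dvd_wt fun y hy => by
    obtain hyC | hty := (hC.mem_neighborCode_iff ht).mp hy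
    · exact hyC.2
    · have h := hN.add_mem_evenSub ⟨Submodule.subset_span (Or.inr rfl), ht4⟩ (hsub hty)
      rw [← add_assoc, ZModModule.add_self, zero_add] at h
      exact h.2
  omega

/-! ### Self-dual codes with a common doubly even subcode -/

variable {d : ℕ} {x : Fin n → ZMod 2}

lemma IsSelfDual.wt_add_le (hC : IsSelfDual C)
    (hmin : ∀ x ∈ dualSet (evenSub C), x ≠ 0 → d ≤ wt x) (hx : x ∈ dualSet (evenSub C))
    (hx1 : x ≠ 1) : wt x + d ≤ n := by
  have hcompl : x + 1 ∈ dualSet (evenSub C) := mem_dualSet_iff.mpr fun y hy => by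
    rw [add_dotProduct, mem_dualSet_iff.mp hx y hy, hC.dotProduct_eq_zero hC.one_mem hy.1,
      add_zero]
  have h0 : x + 1 ≠ 0 := by rwa [Ne, add_eq_zero_iff_eq_neg, ZModModule.neg_eq_self]
  have hle := hmin _ hcompl h0
  have hsum := wt_add_one_add_wt x
  omega

lemma IsSelfDual.wt_of_mem_sdiff (hC : IsSelfDual C) (hD : IsSelfDual D)
    (hCD : evenSub C = evenSub D) (hmin : ∀ x ∈ dualSet (evenSub C), x ≠ 0 → d ≤ wt x)
    (hx : x ∈ (C \ D : Set (Fin n → ZMod 2))) :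
    wt x % 4 = 2 ∧ d ≤ wt x ∧ wt x + d ≤ n := by
  obtain ⟨hxC, hxD⟩ := hx
  have hxdual := hC.subset_dualSet_evenSub hxC
  refine ⟨?_, hmin x hxdual ?_, hC.wt_add_le hmin hxdual ?_⟩
  · have h2 := hC.two_dvd_wt hxC
    have h4 : ¬4 ∣ wt x := fun h => hxD (hCD.subset ⟨hxC, h⟩).1
    omega
  · rintro rfl
    exact hxD D.zero_mem
  · rintro rfl
    exact hxD hD.one_mem

lemma minWtSet_shadow_eq (hC : IsSelfDual C) (hCD : evenSub C = evenSub D)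
    (hmin : ∀ x ∈ dualSet (evenSub C), x ≠ 0 → d ≤ wt x) (hxC : x ∈ C) (hxD : x ∉ D)
    (hwt : wt x = d) : minWtSet (shadow D) = d := by
  refine minWtSet_eq_of_forall_le (fun y hy => hmin y (hCD ▸ hy.1))
    ⟨hCD ▸ hC.subset_dualSet_evenSub hxC, hxD⟩ ?_ hwt
  rintro rfl
  exact hxD D.zero_mem

open Polynomial

/- Both sides of the MacWilliams identity for the difference `P` of the two weight enumerators only
involve words of weight between `d` and `n - d`. -/
lemma IsSelfDual.one_sub_X_sq_pow_dvd_sub {K : Type*} [Field K] [NeZero (2 : K)]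
    (hC : IsSelfDual C) (hD : IsSelfDual D)
    (hwtC : ∀ x ∈ (C \ D : Set (Fin n → ZMod 2)), d ≤ wt x ∧ wt x + d ≤ n)
    (hwtD : ∀ x ∈ (D \ C : Set (Fin n → ZMod 2)), d ≤ wt x ∧ wt x + d ≤ n) :
    (1 - X ^ 2) ^ d ∣ weightEnumerator (C : Set (Fin n → ZMod 2)) 1 (X : K[X]) -
      weightEnumerator (D : Set (Fin n → ZMod 2)) 1 X := by
  have hunit : IsUnit (Nat.card C : K[X]) := by
    rw [hC.card_eq, Nat.cast_pow, Nat.cast_ofNat, ← C_ofNat]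
    exact (isUnit_C.mpr (IsUnit.mk0 _ two_ne_zero)).pow _
  rw [← hunit.dvd_mul_left, mul_sub, hC.card_mul_weightEnumerator, hC.card_eq, ← hD.card_eq,
    hD.card_mul_weightEnumerator, weightEnumerator_sub_weightEnumerator,
    show (1 - X ^ 2 : K[X]) = (1 + X) * (1 - X) by ring, mul_pow]
  exact dvd_sub (pow_mul_pow_dvd_weightEnumerator hwtC _ _)
    (pow_mul_pow_dvd_weightEnumerator hwtD _ _)

theorem weightEnumerator_eq_of_evenSub_eq (hC : IsSelfDual C) (hD : IsSelfDual D)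
    (hCD : evenSub C = evenSub D) (hmin : ∀ x ∈ dualSet (evenSub C), x ≠ 0 → d ≤ wt x)
    (hn : n < 6 * d) :
    weightEnumerator (C : Set (Fin n → ZMod 2)) 1 (X : ℂ[X]) =
      weightEnumerator (D : Set (Fin n → ZMod 2)) 1 X := by
  have hwtC := fun x => hC.wt_of_mem_sdiff hD hCD hmin (x := x)
  have hwtD := fun x => hD.wt_of_mem_sdiff hC hCD.symm (hCD ▸ hmin) (x := x)
  have h1 := hC.one_sub_X_sq_pow_dvd_sub (K := ℂ) hD (fun x hx => (hwtC x hx).2)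
    fun x hx => (hwtD x hx).2
  rw [← sub_eq_zero]
  rw [weightEnumerator_sub_weightEnumerator] at h1 ⊢
  have h0 {S : Set (Fin n → ZMod 2)} (hS : ∀ x ∈ S, wt x % 4 = 2 ∧ d ≤ wt x ∧ wt x + d ≤ n) :
      X ^ d ∣ weightEnumerator S 1 (X : ℂ[X]) := by
    simpa using pow_mul_pow_dvd_weightEnumerator (fun x hx => (hS x hx).2) 1 (X : ℂ[X])
  have hdeg {S : Set (Fin n → ZMod 2)} (hS : ∀ x ∈ S, wt x % 4 = 2 ∧ d ≤ wt x ∧ wt x + d ≤ n) :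
      (weightEnumerator S 1 (X : ℂ[X])).natDegree ≤ n - d :=
    natDegree_weightEnumerator_le fun x hx => Nat.le_sub_of_add_le (hS x hx).2.2
  refine eq_zero_of_pow_dvd_of_natDegree_lt (dvd_sub (h0 hwtC) (h0 hwtD)) h1
    (one_add_X_sq_pow_dvd_of_comp_eq_neg Complex.I_sq ?_ h1)
    ((natDegree_sub_le_of_le (hdeg hwtC) (hdeg hwtD)).trans_lt ?_)
  · rw [sub_comp,
      weightEnumerator_comp_of_wt_mod_four_eq_two Complex.I_sq fun x hx => (hwtC x hx).1,
      weightEnumerator_comp_of_wt_mod_four_eq_two Complex.I_sq fun x hx => (hwtD x hx).1,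
      neg_sub_neg, neg_sub]
  · rw [max_self]
    omega

end EvenSub

/-- Proposition 2.1(i): the neighbors `N₁(C) = C₀ ∪ C₁` and `N₃(C) = C₀ ∪ C₃` of an
s-extremal singly even self-dual `[24k+4, 12k+2, 4k+2]` code (obtained by adjoining a
shadow vector `t` to the doubly even subcode) are again s-extremal singly even self-dual
`[24k+4, 12k+2, 4k+2]` codes. -/
theorem sExtremal_neighbor_24k4 (k : ℕ)
    (C : Submodule (ZMod 2) (Fin (24 * k + 4) → ZMod 2))
    (hse : IsSinglyEvenSelfDual C)
    (hdim : Module.finrank (ZMod 2) C = 12 * k + 2)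
    (hd : minWt C = 4 * k + 2)
    (hshadow : minWtSet (shadow C) = 4 * k + 2)
    (t : Fin (24 * k + 4) → ZMod 2) (ht : t ∈ shadow C) :
    IsSinglyEvenSelfDual (neighborCode C t) ∧
    Module.finrank (ZMod 2) (neighborCode C t) = 12 * k + 2 ∧
    minWt (neighborCode C t) = 4 * k + 2 ∧
    minWtSet (shadow (neighborCode C t)) = 4 * k + 2 := by
  have hC := hse.1
  have hN := hC.neighborCode (by omega) ht
  have hE : evenSub C = evenSub (neighborCode C t) :=
    (hC.evenSub_neighborCode (by omega) ht).symm
  have hmin : ∀ x ∈ dualSet (evenSub C), x ≠ 0 → 4 * k + 2 ≤ wt x := fun x hx h0 => by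
    by_cases hxC : x ∈ C
    · exact hd.ge.trans (minWtSet_le_wt hxC h0)
    · exact hshadow.ge.trans (minWtSet_le_wt ⟨hx, hxC⟩ h0)
  have hminWt : minWt (neighborCode C t) = minWt C := minWtSet_eq_of_weightEnumerator_eq
    (weightEnumerator_eq_of_evenSub_eq hC hN hE hmin (by omega)).symm
  obtain ⟨c, hcC, hwt⟩ : ∃ c ∈ C, wt c = minWt C :=
    exists_wt_eq_minWtSet (hd.trans_ne (by omega))
  have hcN : c ∉ neighborCode C t := fun h => by
    have := (hC.mem_evenSub_of_mem_neighborCode ht hcC h).2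
    omega
  refine ⟨⟨hN, ?_⟩, ?_, hminWt.trans hd, minWtSet_shadow_eq hC hE hmin hcC hcN (hwt.trans hd)⟩
  · by_contra! h4
    have := hN.eight_dvd_of_forall_four_dvd_wt h4
    omega
  · have := hN.two_mul_finrank
    omega
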